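/- Let u : ℝ² → ℝ be a smooth solution of -Δu = π²u on the strip Ω∞ = {(x,y) : 0 < y < 1}, continuous up to the boundary, satisfying u(0,y) = 0 for all y ∈ [0,1], u(x,0) = u(x,1) = 0 for all x ∈ ℝ, and |u(x,y)| ≤ C(1+|x|) for some constant C > 0. Then there exists A ∈ ℝ such that u(x,y) = A·x·sin(πy) for all (x,y) in the strip. -/

import Mathlib

open Real

/-- Partial derivative in the first (x) variable. -/
noncomputable def px (u : ℝ → ℝ → ℝ) : ℝ → ℝ → ℝ := fun x y => deriv (fun t => u t y) x

/-- Partial derivative in the second (y) variable. -/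
noncomputable def py (u : ℝ → ℝ → ℝ) : ℝ → ℝ → ℝ := fun x y => deriv (fun t => u x t) y

open Set Filter Topology intervalIntegral

section SineCompleteness

/-- A function orthogonal to all `sin (kπs)` is orthogonal to all `sin (kπs) cos (πs) ^ j`. -/
lemma integral_mul_sin_mul_cos_pow_eq_zero {f : ℝ → ℝ} (hf : Continuous f)
    (h : ∀ k : ℕ, ∫ s in (0 : ℝ)..1, f s * sin (k * π * s) = 0) (j k : ℕ) :
    ∫ s in (0 : ℝ)..1, f s * sin (k * π * s) * cos (π * s) ^ j = 0 := by
  induction j generalizing k with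
  | zero => simpa using h k
  | succ j ih =>
    cases k with
    | zero => simp
    | succ k =>
      have key : ∀ s : ℝ, f s * sin ((k + 1 : ℕ) * π * s) * cos (π * s) ^ (j + 1) =
          (1 / 2) * (f s * sin ((k + 2 : ℕ) * π * s) * cos (π * s) ^ j)
          + (1 / 2) * (f s * sin (k * π * s) * cos (π * s) ^ j) := by
        intro s
        have e1 : ((k + 2 : ℕ) : ℝ) * π * s = (k + 1 : ℕ) * π * s + π * s := by
          push_cast; ring
        have e2 : (k : ℝ) * π * s = (k + 1 : ℕ) * π * s - π * s := by
          push_cast; ring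
        rw [e1, e2, sin_add, sin_sub]
        ring
      simp_rw [key]
      rw [integral_add, integral_const_mul, integral_const_mul, ih, ih]
      · simp
      all_goals exact Continuous.intervalIntegrable (by fun_prop) _ _

lemma integral_mul_sin_mul_polynomial_cos_eq_zero {f : ℝ → ℝ} (hf : Continuous f)
    (h : ∀ k : ℕ, ∫ s in (0 : ℝ)..1, f s * sin (k * π * s) = 0) (p : Polynomial ℝ) :
    ∫ s in (0 : ℝ)..1, f s * sin (π * s) * p.eval (cos (π * s)) = 0 := by
  induction p using Polynomial.induction_on' with
  | add p q hp hq =>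
    simp_rw [Polynomial.eval_add, mul_add]
    rw [integral_add, hp, hq, add_zero]
    all_goals
      exact Continuous.intervalIntegrable
        ((by fun_prop : Continuous fun s => f s * sin (π * s)).mul
          ((Polynomial.continuous _).comp (by fun_prop))) _ _
  | monomial n a =>
    have := integral_mul_sin_mul_cos_pow_eq_zero hf h n 1
    simp only [Nat.cast_one, one_mul] at this
    simp_rw [Polynomial.eval_monomial, mul_left_comm _ a]
    rw [integral_const_mul, this, mul_zero]

/-- Completeness of the sines `sin (kπs)` on the unit interval, for continuous functions. -/
lemma eq_zero_of_integral_mul_sin_eq_zero {f : ℝ → ℝ} (hf : Continuous f)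
    (h : ∀ k : ℕ, ∫ s in (0 : ℝ)..1, f s * sin (k * π * s) = 0) {y : ℝ} (hy0 : 0 < y)
    (hy1 : y < 1) : f y = 0 := by
  by_contra hne
  have hsin : ∀ s ∈ Icc (0 : ℝ) 1, 0 ≤ sin (π * s) := fun s hs =>
    sin_nonneg_of_nonneg_of_le_pi (by nlinarith [pi_pos, hs.1]) (by nlinarith [pi_pos, hs.2])
  have hpos : 0 < ∫ s in (0 : ℝ)..1, f s * sin (π * s) * f s := by
    refine integral_pos one_pos (by fun_prop) (fun s hs => ?_) ⟨y, ⟨hy0.le, hy1.le⟩, ?_⟩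
    · nlinarith [mul_nonneg (hsin s ⟨hs.1.le, hs.2⟩) (mul_self_nonneg (f s))]
    · have : 0 < sin (π * y) :=
        sin_pos_of_pos_of_lt_pi (by positivity) (by nlinarith [pi_pos])
      nlinarith [mul_pos this (mul_self_pos.2 hne)]
  obtain ⟨M, hM⟩ := isCompact_Icc.exists_bound_of_continuousOn
    (hf.continuousOn (s := Icc (0 : ℝ) 1))
  have hM0 : 0 ≤ M := (norm_nonneg _).trans (hM 0 (by simp))
  set I := ∫ s in (0 : ℝ)..1, f s * sin (π * s) * f s with hI
  have hε : 0 < I / (2 * (M + 1)) := by positivity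
  obtain ⟨p, hp⟩ := exists_polynomial_near_of_continuousOn (-1) 1 (fun t => f (arccos t / π))
    (by fun_prop) _ hε
  have hdiff : I = ∫ s in (0 : ℝ)..1, f s * sin (π * s) * (f s - p.eval (cos (π * s))) := by
    simp_rw [mul_sub]
    rw [integral_sub, integral_mul_sin_mul_polynomial_cos_eq_zero hf h, sub_zero]
    · exact Continuous.intervalIntegrable (by fun_prop) _ _
    · exact Continuous.intervalIntegrable
        ((by fun_prop : Continuous fun s => f s * sin (π * s)).mul
          ((Polynomial.continuous _).comp (by fun_prop))) _ _
  have hle : ‖I‖ ≤ M * (I / (2 * (M + 1))) * |(1 : ℝ) - 0| := by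
    rw [hdiff]
    refine norm_integral_le_of_norm_le_const fun s hs => ?_
    rw [uIoc_of_le zero_le_one] at hs
    have hs' : s ∈ Icc (0 : ℝ) 1 := ⟨hs.1.le, hs.2⟩
    have h1 := hp (cos (π * s)) ⟨neg_one_le_cos _, cos_le_one _⟩
    rw [arccos_cos (by nlinarith [pi_pos, hs.1]) (by nlinarith [pi_pos, hs.2]),
      mul_div_cancel_left₀ _ pi_ne_zero, abs_sub_comm] at h1
    rw [norm_mul, norm_mul, ← hdiff]
    refine mul_le_mul ?_ h1.le (norm_nonneg _) hM0
    calc ‖f s‖ * ‖sin (π * s)‖ ≤ M * 1 :=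
          mul_le_mul (hM s hs') (abs_sin_le_one _) (norm_nonneg _) hM0
      _ = M := mul_one M
  rw [norm_of_nonneg hpos.le, sub_zero, abs_one, mul_one, mul_div_assoc', le_div_iff₀ (by positivity)]
    at hle
  nlinarith

end SineCompleteness

section ODE

/-- Taylor's formula of order two, with the derivative at `0` eliminated through the value at
`1`. -/
lemma eq_integral_of_hasDerivAt_hasDerivAt {F F' G : ℝ → ℝ} (hF : ∀ x, HasDerivAt F (F' x) x)
    (hF' : ∀ x, HasDerivAt F' (G x) x) (hG : Continuous G) (h0 : F 0 = 0) (x : ℝ) :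
    F x = x * (F 1 - ∫ t in (0 : ℝ)..1, (1 - t) * G t) + ∫ t in (0 : ℝ)..x, (x - t) * G t := by
  have hF'c : Continuous F' := continuous_iff_continuousAt.2 fun x => (hF' x).continuousAt
  have taylor : ∀ x, ∫ t in (0 : ℝ)..x, (x - t) * G t = F x - x * F' 0 := by
    intro x
    rw [integral_mul_deriv_eq_deriv_mul (u := fun t => x - t) (u' := fun _ => -1) (v := F')
      (fun t _ => by simpa using (hasDerivAt_id t).const_sub x) (fun t _ => hF' t)
      (continuous_const.intervalIntegrable _ _) (hG.intervalIntegrable _ _)]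
    rw [integral_const_mul, integral_eq_sub_of_hasDerivAt (fun t _ => hF t)
      (hF'c.intervalIntegrable _ _), h0]
    ring
  rw [taylor, taylor]
  ring

lemma eq_zero_of_integral_equation {a : ℝ → ℝ} (ha : Continuous a) {c m K : ℝ} (hm : 0 < m)
    (heq : ∀ x, a x = x * c + ∫ t in (0 : ℝ)..x, (x - t) * (m * a t))
    (hgrowth : ∀ x, |a x| ≤ K * (1 + |x|)) (x : ℝ) : a x = 0 := by
  set b : ℝ → ℝ := fun x => c + m * ∫ t in (0 : ℝ)..x, a t with hb
  have hInt : ∀ x, HasDerivAt (fun x => ∫ t in (0 : ℝ)..x, a t) (a x) x := fun x =>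
    integral_hasDerivAt_right (ha.intervalIntegrable _ _)
      (ha.stronglyMeasurableAtFilter _ _) ha.continuousAt
  have hta : Continuous fun t => t * a t := by fun_prop
  have hInt' : ∀ x, HasDerivAt (fun x => ∫ t in (0 : ℝ)..x, t * a t) (x * a x) x := fun x =>
    integral_hasDerivAt_right (hta.intervalIntegrable _ _)
      (hta.stronglyMeasurableAtFilter _ _) hta.continuousAt
  have heq' : a = fun x => x * c + m * (x * (∫ t in (0 : ℝ)..x, a t) -
      ∫ t in (0 : ℝ)..x, t * a t) := by
    funext x
    conv_lhs => rw [heq x]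
    rw [← integral_const_mul, ← integral_sub (Continuous.intervalIntegrable (by fun_prop) _ _)
      (hta.intervalIntegrable _ _), ← integral_const_mul]
    congr 2
    funext t
    ring
  have hab : ∀ x, HasDerivAt a (b x) x := by
    intro x
    have h := ((hasDerivAt_id x).mul_const c).add
      ((((hasDerivAt_id x).mul (hInt x)).sub (hInt' x)).const_mul m)
    have h' : HasDerivAt (fun x => x * c + m * (x * (∫ t in (0 : ℝ)..x, a t) -
      ∫ t in (0 : ℝ)..x, t * a t)) (b x) x := by
      refine h.congr_deriv ?_
      simp only [hb, id]
      ring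
    rwa [← heq'] at h'
  have hba : ∀ x, HasDerivAt b (m * a x) x := fun x => ((hInt x).const_mul m).const_add c
  have ha0 : a 0 = 0 := by simpa using heq 0
  obtain ⟨w, hw, rfl⟩ : ∃ w : ℝ, 0 < w ∧ m = w ^ 2 := ⟨√m, sqrt_pos.2 hm, (sq_sqrt hm.le).symm⟩
  have hwx : ∀ x, HasDerivAt (fun x => w * x) w x := fun x => by
    simpa using (hasDerivAt_id x).const_mul w
  have hp : ∀ x, b x * cosh (w * x) - w * a x * sinh (w * x) = c := by
    intro x
    have hd : ∀ x, HasDerivAt (fun x => b x * cosh (w * x) - w * a x * sinh (w * x)) 0 x := by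
      intro x
      refine (((hba x).mul (hwx x).cosh).sub
        (((hab x).const_mul w).mul (hwx x).sinh)).congr_deriv ?_
      ring
    rw [is_const_of_deriv_eq_zero (fun x => (hd x).differentiableAt) (fun x => (hd x).deriv) x 0]
    simp [hb]
  have hq : ∀ x, w * a x * cosh (w * x) - b x * sinh (w * x) = 0 := by
    intro x
    have hd : ∀ x, HasDerivAt (fun x => w * a x * cosh (w * x) - b x * sinh (w * x)) 0 x := by
      intro x
      refine ((((hab x).const_mul w).mul (hwx x).cosh).sub
        ((hba x).mul (hwx x).sinh)).congr_deriv ?_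
      ring
    rw [is_const_of_deriv_eq_zero (fun x => (hd x).differentiableAt) (fun x => (hd x).deriv) x 0]
    simp [ha0]
  have hsol : ∀ x, w * a x = c * sinh (w * x) := by
    intro x
    linear_combination cosh (w * x) * hq x + sinh (w * x) * hp x
      - w * a x * cosh_sq_sub_sinh_sq (w * x)
  have hsinh : ∀ t : ℝ, 0 ≤ t → t ^ 2 / 4 ≤ sinh t := by
    intro t ht
    rw [sinh_eq]
    have h1 := quadratic_le_exp_of_nonneg ht
    have h2 : exp (-t) ≤ 1 := exp_le_one_iff.2 (by linarith)
    linarith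
  have hc : c = 0 := by
    by_contra hc
    have hc' : 0 < |c| := abs_pos.2 hc
    have hK : 0 ≤ K := by
      have := (abs_nonneg _).trans (hgrowth 0)
      simpa using this
    have hbound : ∀ x, 0 ≤ x → |c| * (w * x ^ 2 / 4) ≤ K * (1 + x) := by
      intro x hx
      have h1 := hgrowth x
      have h2 := congrArg abs (hsol x)
      have h3 := hsinh (w * x) (by positivity)
      rw [abs_mul, abs_mul, abs_of_pos hw, abs_of_nonneg (a := sinh (w * x))
        (le_trans (by positivity) h3)] at h2
      rw [abs_of_nonneg hx] at h1
      have h4 := mul_le_mul_of_nonneg_left h3 hc'.le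
      have h5 : w * (|c| * (w * x ^ 2 / 4)) ≤ w * (K * (1 + x)) := by nlinarith
      exact le_of_mul_le_mul_left h5 hw
    set L := |c| * w / 4 with hL
    have hL0 : 0 < L := by positivity
    have h := hbound (2 * K / L + 1) (by positivity)
    have e : |c| * (w * (2 * K / L + 1) ^ 2 / 4) = (2 * K + L) * (2 * K / L + 1) := by
      have : |c| * (w * (2 * K / L + 1) ^ 2 / 4) = L * (2 * K / L + 1) * (2 * K / L + 1) := by
        rw [hL]; ring
      rw [this, mul_add L, mul_div_cancel₀ _ hL0.ne', mul_one]
    rw [e] at h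
    have : 0 ≤ 2 * K / L := by positivity
    nlinarith
  have := hsol x
  rw [hc, zero_mul] at this
  exact (mul_eq_zero.1 this).resolve_left hw.ne'

end ODE

section ParametricIntegral

lemma hasDerivAt_integral_mul {g g' : ℝ → ℝ → ℝ} {φ : ℝ → ℝ} (hφ : Continuous φ)
    (hg : ContinuousOn (fun p : ℝ × ℝ => g p.1 p.2) (univ ×ˢ Icc 0 1))
    (hg' : ContinuousOn (fun p : ℝ × ℝ => g' p.1 p.2) (univ ×ˢ Icc 0 1))
    (h : ∀ x, ∀ s ∈ Icc (0 : ℝ) 1, HasDerivAt (fun t => g t s) (g' x s) x) (x : ℝ) :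
    HasDerivAt (fun x => ∫ s in (0 : ℝ)..1, g x s * φ s) (∫ s in (0 : ℝ)..1, g' x s * φ s) x := by
  have slice : ∀ {f : ℝ → ℝ → ℝ},
      ContinuousOn (fun p : ℝ × ℝ => f p.1 p.2) (univ ×ˢ Icc 0 1) → ∀ x,
      IntervalIntegrable (fun s => f x s * φ s) MeasureTheory.volume 0 1 := by
    intro f hf x
    refine ContinuousOn.intervalIntegrable ?_
    rw [uIcc_of_le zero_le_one]
    exact (hf.comp (f := fun s : ℝ => (x, s)) (by fun_prop)
      (fun s hs => ⟨mem_univ _, hs⟩)).mul hφ.continuousOn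
  have hcomp : IsCompact (Icc (x - 1) (x + 1) ×ˢ Icc (0 : ℝ) 1) :=
    isCompact_Icc.prod isCompact_Icc
  obtain ⟨M, hM⟩ := hcomp.exists_bound_of_continuousOn
    (f := fun p : ℝ × ℝ => g' p.1 p.2 * φ p.2)
    ((hg'.mono (prod_mono (subset_univ _) subset_rfl)).mul (by fun_prop))
  refine (hasDerivAt_integral_of_dominated_loc_of_deriv_le (bound := fun _ => M)
    (F := fun x s => g x s * φ s) (F' := fun x s => g' x s * φ s)
    (Icc_mem_nhds (sub_one_lt x) (lt_add_one x))
    (Eventually.of_forall fun x => (slice hg x).aestronglyMeasurable_restrict_uIoc) (slice hg x)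
    (slice hg' x).aestronglyMeasurable_restrict_uIoc
    (Eventually.of_forall fun s hs z hz => ?_)
    (continuous_const.intervalIntegrable _ _)
    (Eventually.of_forall fun s hs z hz => ?_)).2
  all_goals
    rw [uIoc_of_le zero_le_one] at hs
  · exact hM (z, s) ⟨hz, hs.1.le, hs.2⟩
  · exact (h z s ⟨hs.1.le, hs.2⟩).mul_const _

end ParametricIntegral

section Strip

lemma isOpen_strip : IsOpen {p : ℝ × ℝ | 0 < p.2 ∧ p.2 < 1} :=
  (isOpen_lt continuous_const continuous_snd).inter (isOpen_lt continuous_snd continuous_const)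

variable {u : ℝ → ℝ → ℝ}

lemma hasDerivAt_px
    (hu : ContDiffOn ℝ (⊤ : ℕ∞) (fun p : ℝ × ℝ => u p.1 p.2) {p : ℝ × ℝ | 0 < p.2 ∧ p.2 < 1})
    {x y : ℝ} (hy : 0 < y ∧ y < 1) : HasDerivAt (fun t => u t y) (px u x y) x := by
  have hd : DifferentiableAt ℝ (fun p : ℝ × ℝ => u p.1 p.2) (x, y) :=
    (hu.contDiffAt (isOpen_strip.mem_nhds hy)).differentiableAt (by simp)
  exact (hd.comp x (f := fun t : ℝ => (t, y)) (by fun_prop)).hasDerivAt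

lemma hasDerivAt_py
    (hu : ContDiffOn ℝ (⊤ : ℕ∞) (fun p : ℝ × ℝ => u p.1 p.2) {p : ℝ × ℝ | 0 < p.2 ∧ p.2 < 1})
    {x y : ℝ} (hy : 0 < y ∧ y < 1) : HasDerivAt (fun t => u x t) (py u x y) y := by
  have hd : DifferentiableAt ℝ (fun p : ℝ × ℝ => u p.1 p.2) (x, y) :=
    (hu.contDiffAt (isOpen_strip.mem_nhds hy)).differentiableAt (by simp)
  exact (hd.comp y (f := fun t : ℝ => (x, t)) (by fun_prop)).hasDerivAt

lemma contDiffOn_px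
    (hu : ContDiffOn ℝ (⊤ : ℕ∞) (fun p : ℝ × ℝ => u p.1 p.2) {p : ℝ × ℝ | 0 < p.2 ∧ p.2 < 1}) :
    ContDiffOn ℝ (⊤ : ℕ∞) (fun p : ℝ × ℝ => px u p.1 p.2) {p : ℝ × ℝ | 0 < p.2 ∧ p.2 < 1} := by
  refine ((hu.fderiv_of_isOpen isOpen_strip (m := (⊤ : ℕ∞)) (by simp)).clm_apply
    (contDiffOn_const (c := ((1, 0) : ℝ × ℝ)))).congr fun p hp => ?_
  have hd : DifferentiableAt ℝ (fun p : ℝ × ℝ => u p.1 p.2) p :=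
    (hu.contDiffAt (isOpen_strip.mem_nhds hp)).differentiableAt (by simp)
  have hl : HasDerivAt (fun t : ℝ => (t, p.2)) ((1, 0) : ℝ × ℝ) p.1 :=
    (hasDerivAt_id p.1).prodMk (hasDerivAt_const p.1 p.2)
  exact (hd.hasFDerivAt.comp_hasDerivAt p.1 hl).deriv

lemma contDiffOn_py
    (hu : ContDiffOn ℝ (⊤ : ℕ∞) (fun p : ℝ × ℝ => u p.1 p.2) {p : ℝ × ℝ | 0 < p.2 ∧ p.2 < 1}) :
    ContDiffOn ℝ (⊤ : ℕ∞) (fun p : ℝ × ℝ => py u p.1 p.2) {p : ℝ × ℝ | 0 < p.2 ∧ p.2 < 1} := by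
  refine ((hu.fderiv_of_isOpen isOpen_strip (m := (⊤ : ℕ∞)) (by simp)).clm_apply
    (contDiffOn_const (c := ((0, 1) : ℝ × ℝ)))).congr fun p hp => ?_
  have hd : DifferentiableAt ℝ (fun p : ℝ × ℝ => u p.1 p.2) p :=
    (hu.contDiffAt (isOpen_strip.mem_nhds hp)).differentiableAt (by simp)
  have hl : HasDerivAt (fun t : ℝ => (p.1, t)) ((0, 1) : ℝ × ℝ) p.2 :=
    (hasDerivAt_const p.2 p.1).prodMk (hasDerivAt_id p.2)
  exact (hd.hasFDerivAt.comp_hasDerivAt p.2 hl).deriv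

lemma shrink_mem_Ioo {δ s : ℝ} (hδ : 0 < δ) (hδ' : δ < 1 / 2) (hs : s ∈ Icc (0 : ℝ) 1) :
    0 < δ + (1 - 2 * δ) * s ∧ δ + (1 - 2 * δ) * s < 1 := by
  constructor <;> nlinarith [hs.1, hs.2]

lemma continuousOn_shrink {v : ℝ → ℝ → ℝ}
    (hv : ContDiffOn ℝ (⊤ : ℕ∞) (fun p : ℝ × ℝ => v p.1 p.2) {p : ℝ × ℝ | 0 < p.2 ∧ p.2 < 1})
    {δ : ℝ} (hδ : 0 < δ) (hδ' : δ < 1 / 2) :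
    ContinuousOn (fun p : ℝ × ℝ => v p.1 (δ + (1 - 2 * δ) * p.2)) (univ ×ˢ Icc 0 1) :=
  hv.continuousOn.comp (f := fun p : ℝ × ℝ => (p.1, δ + (1 - 2 * δ) * p.2)) (by fun_prop)
    fun _ hp => shrink_mem_Ioo hδ hδ' hp.2

/-- The `k`-th sine coefficient of `u x` on the interval `[δ, 1 - δ]`, rescaled to `[0, 1]`. -/
noncomputable def sineCoeff (u : ℝ → ℝ → ℝ) (δ : ℝ) (k : ℕ) (x : ℝ) : ℝ :=
  ∫ s in (0 : ℝ)..1, u x (δ + (1 - 2 * δ) * s) * sin (k * π * s)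

lemma hasDerivAt_sineCoeff
    (hu : ContDiffOn ℝ (⊤ : ℕ∞) (fun p : ℝ × ℝ => u p.1 p.2) {p : ℝ × ℝ | 0 < p.2 ∧ p.2 < 1})
    {δ : ℝ} (hδ : 0 < δ) (hδ' : δ < 1 / 2) (k : ℕ) (x : ℝ) :
    HasDerivAt (sineCoeff u δ k) (sineCoeff (px u) δ k x) x :=
  hasDerivAt_integral_mul (g := fun x s => u x (δ + (1 - 2 * δ) * s))
    (g' := fun x s => px u x (δ + (1 - 2 * δ) * s)) (by fun_prop) (continuousOn_shrink hu hδ hδ')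
    (continuousOn_shrink (contDiffOn_px hu) hδ hδ')
    (fun _ _ hs => hasDerivAt_px hu (shrink_mem_Ioo hδ hδ' hs)) x

/-- The second `x`-derivative of the truncated sine coefficient of a solution: the coefficient
itself up to a factor, plus the boundary values of `u`. -/
noncomputable def sineCoeffSource (u : ℝ → ℝ → ℝ) (δ : ℝ) (k : ℕ) (x : ℝ) : ℝ :=
  ((k * π) ^ 2 / (1 - 2 * δ) ^ 2 - π ^ 2) * sineCoeff u δ k x +
    k * π / (1 - 2 * δ) ^ 2 * (u x (1 - δ) * cos (k * π) - u x δ)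

lemma sineCoeff_px_px
    (hu : ContDiffOn ℝ (⊤ : ℕ∞) (fun p : ℝ × ℝ => u p.1 p.2) {p : ℝ × ℝ | 0 < p.2 ∧ p.2 < 1})
    (hPDE : ∀ x y : ℝ, 0 < y → y < 1 → px (px u) x y + py (py u) x y = -(π ^ 2) * u x y)
    {δ : ℝ} (hδ : 0 < δ) (hδ' : δ < 1 / 2) (k : ℕ) (x : ℝ) :
    sineCoeff (px (px u)) δ k x = sineCoeffSource u δ k x := by
  have hr : (1 - 2 * δ) ≠ 0 := by linarith
  have hIcc : uIcc (0 : ℝ) 1 = Icc 0 1 := uIcc_of_le zero_le_one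
  have slice : ∀ {v : ℝ → ℝ → ℝ}, ContDiffOn ℝ (⊤ : ℕ∞) (fun p : ℝ × ℝ => v p.1 p.2)
      {p : ℝ × ℝ | 0 < p.2 ∧ p.2 < 1} →
      ContinuousOn (fun s => v x (δ + (1 - 2 * δ) * s)) (uIcc 0 1) := by
    intro v hv
    rw [hIcc]
    exact (continuousOn_shrink hv hδ hδ').comp (f := fun s : ℝ => (x, s)) (by fun_prop)
      fun s hs => ⟨mem_univ _, hs⟩
  have chain : ∀ {v : ℝ → ℝ → ℝ}, ContDiffOn ℝ (⊤ : ℕ∞) (fun p : ℝ × ℝ => v p.1 p.2)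
      {p : ℝ × ℝ | 0 < p.2 ∧ p.2 < 1} → ∀ s ∈ uIcc (0 : ℝ) 1,
      HasDerivAt (fun s => v x (δ + (1 - 2 * δ) * s))
        (py v x (δ + (1 - 2 * δ) * s) * (1 - 2 * δ)) s := by
    intro v hv s hs
    rw [hIcc] at hs
    refine (hasDerivAt_py hv (shrink_mem_Ioo hδ hδ' hs)).comp s ?_
    simpa using ((hasDerivAt_id s).const_mul (1 - 2 * δ)).const_add δ
  have hpy := contDiffOn_py hu
  have hpyy := contDiffOn_py hpy
  have harg : ∀ s : ℝ, HasDerivAt (fun s : ℝ => k * π * s) (k * π) s := fun s => by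
    simpa using (hasDerivAt_id s).const_mul (k * π)
  have hsin : ∀ s ∈ uIcc (0 : ℝ) 1,
      HasDerivAt (fun s => sin (k * π * s)) (cos (k * π * s) * (k * π)) s :=
    fun s _ => (harg s).sin
  have hcos : ∀ s ∈ uIcc (0 : ℝ) 1,
      HasDerivAt (fun s => cos (k * π * s)) (-sin (k * π * s) * (k * π)) s :=
    fun s _ => (harg s).cos
  have parts₁ := integral_mul_deriv_eq_deriv_mul hsin (chain hpy)
    (Continuous.intervalIntegrable (by fun_prop) _ _)
    ((slice hpyy).mul continuousOn_const).intervalIntegrable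
  have parts₂ := integral_mul_deriv_eq_deriv_mul hcos (chain hu)
    (Continuous.intervalIntegrable (by fun_prop) _ _)
    ((slice hpy).mul continuousOn_const).intervalIntegrable
  have e₁ : ∫ s in (0 : ℝ)..1, sin (k * π * s) * (py (py u) x (δ + (1 - 2 * δ) * s) * (1 - 2 * δ)) =
      (1 - 2 * δ) * sineCoeff (py (py u)) δ k x := by
    rw [sineCoeff, ← integral_const_mul]
    exact integral_congr fun s _ => by ring
  have e₂ : ∫ s in (0 : ℝ)..1, cos (k * π * s) * (k * π) * py u x (δ + (1 - 2 * δ) * s) =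
      k * π / (1 - 2 * δ) * ∫ s in (0 : ℝ)..1,
        cos (k * π * s) * (py u x (δ + (1 - 2 * δ) * s) * (1 - 2 * δ)) := by
    rw [← integral_const_mul]
    refine integral_congr fun s _ => ?_
    rw [div_mul_eq_mul_div, eq_div_iff hr]
    ring
  have e₃ : ∫ s in (0 : ℝ)..1, -sin (k * π * s) * (k * π) * u x (δ + (1 - 2 * δ) * s) =
      -(k * π) * sineCoeff u δ k x := by
    rw [sineCoeff, ← integral_const_mul]
    exact integral_congr fun s _ => by ring
  rw [e₁, e₂, parts₂, e₃] at parts₁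
  have hsum : sineCoeff (px (px u)) δ k x =
      -(π ^ 2) * sineCoeff u δ k x - sineCoeff (py (py u)) δ k x := by
    have hInt : ∀ {v : ℝ → ℝ → ℝ}, ContDiffOn ℝ (⊤ : ℕ∞) (fun p : ℝ × ℝ => v p.1 p.2)
        {p : ℝ × ℝ | 0 < p.2 ∧ p.2 < 1} →
        IntervalIntegrable (fun s => v x (δ + (1 - 2 * δ) * s) * sin (k * π * s))
          MeasureTheory.volume 0 1 :=
      fun hv => ((slice hv).mul (by fun_prop)).intervalIntegrable
    simp only [sineCoeff]
    rw [← integral_const_mul, ← integral_sub ((hInt hu).const_mul _) (hInt hpyy)]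
    refine integral_congr fun s hs => ?_
    rw [hIcc] at hs
    obtain ⟨h1, h2⟩ := shrink_mem_Ioo hδ hδ' hs
    have := hPDE x _ h1 h2
    linear_combination sin (k * π * s) * this
  have hend : δ + (1 - 2 * δ) = 1 - δ := by ring
  simp only [mul_one, mul_zero, add_zero, sin_zero, cos_zero, zero_mul, sin_nat_mul_pi, one_mul,
    hend, sub_zero, zero_sub] at parts₁
  rw [hsum, sineCoeffSource]
  field_simp at parts₁ ⊢
  linear_combination -(1 : ℝ) * parts₁

end Strip

section BoundaryLimit

variable {u : ℝ → ℝ → ℝ} {C : ℝ}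

lemma shrink_mem_Icc {δ s : ℝ} (hδ : 0 ≤ δ) (hδ' : δ ≤ 1 / 2) (hs : s ∈ Icc (0 : ℝ) 1) :
    0 ≤ δ + (1 - 2 * δ) * s ∧ δ + (1 - 2 * δ) * s ≤ 1 := by
  constructor <;> nlinarith [hs.1, hs.2]

lemma continuous_slice_left
    (hcont : ContinuousOn (fun p : ℝ × ℝ => u p.1 p.2) {p : ℝ × ℝ | 0 ≤ p.2 ∧ p.2 ≤ 1})
    {y : ℝ} (hy : 0 ≤ y ∧ y ≤ 1) : Continuous fun x => u x y :=
  hcont.comp_continuous (f := fun x : ℝ => (x, y)) (by fun_prop) fun _ => hy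

lemma continuousOn_slice_right
    (hcont : ContinuousOn (fun p : ℝ × ℝ => u p.1 p.2) {p : ℝ × ℝ | 0 ≤ p.2 ∧ p.2 ≤ 1}) (x : ℝ) :
    ContinuousOn (fun y => u x y) (Icc 0 1) :=
  hcont.comp (f := fun y : ℝ => (x, y)) (by fun_prop) fun _ hy => hy

lemma abs_sineCoeff_le
    (hgrowth : ∀ x y : ℝ, 0 ≤ y → y ≤ 1 → |u x y| ≤ C * (1 + |x|))
    {δ : ℝ} (hδ : 0 ≤ δ) (hδ' : δ ≤ 1 / 2) (k : ℕ) (x : ℝ) :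
    |sineCoeff u δ k x| ≤ C * (1 + |x|) := by
  have h := norm_integral_le_of_norm_le_const (a := (0 : ℝ)) (b := 1) (C := C * (1 + |x|))
    (f := fun s => u x (δ + (1 - 2 * δ) * s) * sin (k * π * s)) fun s hs => by
      rw [uIoc_of_le zero_le_one] at hs
      obtain ⟨h1, h2⟩ := shrink_mem_Icc hδ hδ' ⟨hs.1.le, hs.2⟩
      rw [norm_mul]
      exact (mul_le_of_le_one_right (norm_nonneg _) (abs_sin_le_one _)).trans (hgrowth x _ h1 h2)
  simpa [sineCoeff] using h

lemma eventually_small : ∀ᶠ δ : ℝ in 𝓝[>] 0, 0 < δ ∧ δ < 1 / 4 :=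
  Ioo_mem_nhdsGT (by norm_num)

lemma tendsto_sineCoeff
    (hcont : ContinuousOn (fun p : ℝ × ℝ => u p.1 p.2) {p : ℝ × ℝ | 0 ≤ p.2 ∧ p.2 ≤ 1})
    (hgrowth : ∀ x y : ℝ, 0 ≤ y → y ≤ 1 → |u x y| ≤ C * (1 + |x|)) (k : ℕ) (x : ℝ) :
    Tendsto (fun δ => sineCoeff u δ k x) (𝓝[>] 0) (𝓝 (sineCoeff u 0 k x)) := by
  refine tendsto_integral_filter_of_dominated_convergence (fun _ => C * (1 + |x|)) ?_ ?_
    (continuous_const.intervalIntegrable _ _) (Eventually.of_forall fun s hs => ?_)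
  · filter_upwards [eventually_small] with δ hδ
    refine (ContinuousOn.intervalIntegrable ?_).aestronglyMeasurable_restrict_uIoc
    rw [uIcc_of_le zero_le_one]
    exact ((continuousOn_slice_right hcont x).comp (by fun_prop)
      fun s hs => shrink_mem_Icc hδ.1.le (by linarith) hs).mul (by fun_prop)
  · filter_upwards [eventually_small] with δ hδ
    refine Eventually.of_forall fun s hs => ?_
    rw [uIoc_of_le zero_le_one] at hs
    obtain ⟨h1, h2⟩ := shrink_mem_Icc hδ.1.le (by linarith) ⟨hs.1.le, hs.2⟩
    rw [norm_mul]
    exact (mul_le_of_le_one_right (norm_nonneg _) (abs_sin_le_one _)).trans (hgrowth x _ h1 h2)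
  · rw [uIoc_of_le zero_le_one] at hs
    have hs' : s ∈ Icc (0 : ℝ) 1 := ⟨hs.1.le, hs.2⟩
    refine Tendsto.mul_const _ ?_
    refine (continuousOn_slice_right hcont x _
      (shrink_mem_Icc le_rfl (by norm_num) hs')).tendsto.comp (tendsto_nhdsWithin_iff.2 ⟨?_, ?_⟩)
    · exact Tendsto.mono_left (Continuous.tendsto (by fun_prop) 0) nhdsWithin_le_nhds
    · filter_upwards [eventually_small] with δ hδ
      exact shrink_mem_Icc hδ.1.le (by linarith) hs'

lemma tendsto_sineCoeffSource
    (hcont : ContinuousOn (fun p : ℝ × ℝ => u p.1 p.2) {p : ℝ × ℝ | 0 ≤ p.2 ∧ p.2 ≤ 1})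
    (hgrowth : ∀ x y : ℝ, 0 ≤ y → y ≤ 1 → |u x y| ≤ C * (1 + |x|)) (k : ℕ) (x : ℝ) :
    Tendsto (fun δ => sineCoeffSource u δ k x) (𝓝[>] 0) (𝓝 (sineCoeffSource u 0 k x)) := by
  have hr : Tendsto (fun δ : ℝ => (1 - 2 * δ) ^ 2) (𝓝[>] 0) (𝓝 ((1 - 2 * 0) ^ 2)) :=
    Tendsto.mono_left (Continuous.tendsto (by fun_prop) 0) nhdsWithin_le_nhds
  have hbot : Tendsto (fun δ => u x δ) (𝓝[>] 0) (𝓝 (u x 0)) := by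
    refine (continuousOn_slice_right hcont x 0 (by simp)).tendsto.comp
      (tendsto_nhdsWithin_iff.2 ⟨tendsto_id.mono_left nhdsWithin_le_nhds, ?_⟩)
    filter_upwards [eventually_small] with δ hδ
    exact ⟨hδ.1.le, by linarith⟩
  have htop : Tendsto (fun δ => u x (1 - δ)) (𝓝[>] 0) (𝓝 (u x (1 - 0))) := by
    refine (continuousOn_slice_right hcont x (1 - 0) (by simp)).tendsto.comp
      (tendsto_nhdsWithin_iff.2
        ⟨Tendsto.mono_left (Continuous.tendsto (by fun_prop) 0) nhdsWithin_le_nhds, ?_⟩)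
    filter_upwards [eventually_small] with δ hδ
    exact ⟨by linarith, by linarith⟩
  have hne : ((1 : ℝ) - 2 * 0) ^ 2 ≠ 0 := by norm_num
  exact (((tendsto_const_nhds.div hr hne).sub_const _).mul
    (tendsto_sineCoeff hcont hgrowth k x)).add
    ((tendsto_const_nhds.div hr hne).mul ((htop.mul_const _).sub hbot))

lemma abs_sineCoeffSource_le
    (hgrowth : ∀ x y : ℝ, 0 ≤ y → y ≤ 1 → |u x y| ≤ C * (1 + |x|))
    {δ : ℝ} (hδ : 0 < δ) (hδ' : δ < 1 / 4) (k : ℕ) (x : ℝ) :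
    |sineCoeffSource u δ k x| ≤
      (4 * (k * π) ^ 2 + π ^ 2 + 8 * (k * π)) * (C * (1 + |x|)) := by
  have hr : (1 : ℝ) / 4 ≤ (1 - 2 * δ) ^ 2 := by nlinarith
  have hr0 : 0 < (1 - 2 * δ) ^ 2 := by linarith
  have hdiv : ∀ q : ℝ, 0 ≤ q → 0 ≤ q / (1 - 2 * δ) ^ 2 ∧ q / (1 - 2 * δ) ^ 2 ≤ 4 * q :=
    fun q hq => ⟨by positivity, by rw [div_le_iff₀ hr0]; nlinarith⟩
  obtain ⟨h1, h2⟩ := hdiv ((k * π) ^ 2) (by positivity)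
  obtain ⟨h3, h4⟩ := hdiv (k * π) (by positivity)
  have hB := abs_sineCoeff_le hgrowth hδ.le (by linarith) k x
  have hB0 := (abs_nonneg _).trans hB
  have hA : |(k * π) ^ 2 / (1 - 2 * δ) ^ 2 - π ^ 2| ≤ 4 * (k * π) ^ 2 + π ^ 2 := by
    rw [abs_le]
    constructor <;> nlinarith [sq_nonneg π, sq_nonneg (k * π)]
  have hD : |u x (1 - δ) * cos (k * π) - u x δ| ≤ 2 * (C * (1 + |x|)) := by
    refine (abs_sub _ _).trans ?_
    rw [abs_mul]
    have := mul_le_of_le_one_right (abs_nonneg (u x (1 - δ))) (abs_cos_le_one (k * π))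
    linarith [hgrowth x δ hδ.le (by linarith), hgrowth x (1 - δ) (by linarith) (by linarith)]
  refine (abs_add_le _ _).trans ?_
  rw [abs_mul, abs_mul, abs_of_nonneg h3]
  have := mul_le_mul hA hB (abs_nonneg _) (by positivity)
  have := mul_le_mul h4 hD (abs_nonneg _) (by positivity)
  linarith

lemma continuous_sineCoeffSource
    (hu : ContDiffOn ℝ (⊤ : ℕ∞) (fun p : ℝ × ℝ => u p.1 p.2) {p : ℝ × ℝ | 0 < p.2 ∧ p.2 < 1})
    (hcont : ContinuousOn (fun p : ℝ × ℝ => u p.1 p.2) {p : ℝ × ℝ | 0 ≤ p.2 ∧ p.2 ≤ 1})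
    {δ : ℝ} (hδ : 0 < δ) (hδ' : δ < 1 / 2) (k : ℕ) : Continuous (sineCoeffSource u δ k) := by
  have h1 : Continuous (sineCoeff u δ k) := continuous_iff_continuousAt.2 fun x =>
    (hasDerivAt_sineCoeff hu hδ hδ' k x).continuousAt
  have h2 := continuous_slice_left hcont (y := δ) ⟨hδ.le, by linarith⟩
  have h3 := continuous_slice_left hcont (y := 1 - δ) ⟨by linarith, by linarith⟩
  exact (continuous_const.mul h1).add (continuous_const.mul ((h3.mul_const _).sub h2))

/-- The sine coefficients of a solution satisfy, in integrated form, the equation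
`a'' = ((kπ)² - π²) a`. -/
lemma sineCoeff_eq_integral
    (hu : ContDiffOn ℝ (⊤ : ℕ∞) (fun p : ℝ × ℝ => u p.1 p.2) {p : ℝ × ℝ | 0 < p.2 ∧ p.2 < 1})
    (hcont : ContinuousOn (fun p : ℝ × ℝ => u p.1 p.2) {p : ℝ × ℝ | 0 ≤ p.2 ∧ p.2 ≤ 1})
    (hPDE : ∀ x y : ℝ, 0 < y → y < 1 → px (px u) x y + py (py u) x y = -(π ^ 2) * u x y)
    (h0 : ∀ y : ℝ, 0 ≤ y → y ≤ 1 → u 0 y = 0) (hb : ∀ x : ℝ, u x 0 = 0 ∧ u x 1 = 0)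
    (hgrowth : ∀ x y : ℝ, 0 ≤ y → y ≤ 1 → |u x y| ≤ C * (1 + |x|)) (k : ℕ) :
    ∃ c : ℝ, ∀ x, sineCoeff u 0 k x =
      x * c + ∫ t in (0 : ℝ)..x, (x - t) * (((k * π) ^ 2 - π ^ 2) * sineCoeff u 0 k t) := by
  have hsource : ∀ t, sineCoeffSource u 0 k t = ((k * π) ^ 2 - π ^ 2) * sineCoeff u 0 k t := by
    intro t
    simp [sineCoeffSource, hb]
  have hlim : ∀ x, Tendsto (fun δ => ∫ t in (0 : ℝ)..x, (x - t) * sineCoeffSource u δ k t)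
      (𝓝[>] 0) (𝓝 (∫ t in (0 : ℝ)..x, (x - t) * sineCoeffSource u 0 k t)) := by
    intro x
    refine tendsto_integral_filter_of_dominated_convergence (fun t => |x - t| *
      ((4 * (k * π) ^ 2 + π ^ 2 + 8 * (k * π)) * (C * (1 + |t|)))) ?_ ?_
      (Continuous.intervalIntegrable (by fun_prop) _ _) (Eventually.of_forall fun t _ =>
        (tendsto_sineCoeffSource hcont hgrowth k t).const_mul _)
    · filter_upwards [eventually_small] with δ hδ
      have := continuous_sineCoeffSource hu hcont hδ.1 (by linarith) k
      exact Continuous.aestronglyMeasurable (by fun_prop)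
    · filter_upwards [eventually_small] with δ hδ
      refine Eventually.of_forall fun t _ => ?_
      rw [norm_mul]
      exact mul_le_mul_of_nonneg_left (abs_sineCoeffSource_le hgrowth hδ.1 hδ.2 k t)
        (norm_nonneg _)
  refine ⟨sineCoeff u 0 k 1 - ∫ t in (0 : ℝ)..1, (1 - t) * sineCoeffSource u 0 k t, fun x => ?_⟩
  simp_rw [← hsource]
  refine tendsto_nhds_unique (tendsto_sineCoeff hcont hgrowth k x)
    (((((tendsto_sineCoeff hcont hgrowth k 1).sub (hlim 1)).const_mul x).add
      (hlim x)).congr' ?_)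
  filter_upwards [eventually_small] with δ hδ
  have hδ' : δ < 1 / 2 := by linarith
  refine (eq_integral_of_hasDerivAt_hasDerivAt (hasDerivAt_sineCoeff hu hδ.1 hδ' k)
    (fun x => ?_) (continuous_sineCoeffSource hu hcont hδ.1 hδ' k) ?_ x).symm
  · rw [← sineCoeff_px_px hu hPDE hδ.1 hδ' k x]
    exact hasDerivAt_sineCoeff (contDiffOn_px hu) hδ.1 hδ' k x
  · refine (integral_congr fun s hs => ?_).trans integral_zero
    rw [uIcc_of_le zero_le_one] at hs
    obtain ⟨h1, h2⟩ := shrink_mem_Icc hδ.1.le hδ'.le hs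
    simp [h0 _ h1 h2]

end BoundaryLimit

lemma integral_cos_int_mul_pi {n : ℤ} (hn : n ≠ 0) : ∫ s in (0 : ℝ)..1, cos (n * π * s) = 0 := by
  have : (n : ℝ) * π ≠ 0 := mul_ne_zero (by exact_mod_cast hn) pi_ne_zero
  rw [integral_comp_mul_left _ this, integral_cos]
  simp [sin_int_mul_pi]

lemma integral_sin_pi_mul_sin (k : ℕ) :
    ∫ s in (0 : ℝ)..1, sin (π * s) * sin (k * π * s) = if k = 1 then 1 / 2 else 0 := by
  have key : ∀ s : ℝ, sin (π * s) * sin (k * π * s) =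
      (1 / 2) * cos (((k - 1 : ℤ) : ℝ) * π * s) - (1 / 2) * cos (((k + 1 : ℤ) : ℝ) * π * s) := by
    intro s
    have e1 : ((k - 1 : ℤ) : ℝ) * π * s = k * π * s - π * s := by push_cast; ring
    have e2 : ((k + 1 : ℤ) : ℝ) * π * s = k * π * s + π * s := by push_cast; ring
    rw [e1, e2, cos_sub, cos_add]
    ring
  simp_rw [key]
  rw [integral_sub (Continuous.intervalIntegrable (by fun_prop) _ _)
    (Continuous.intervalIntegrable (by fun_prop) _ _), integral_const_mul, integral_const_mul,
    integral_cos_int_mul_pi (n := k + 1) (by omega)]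
  split_ifs with hk
  · simp [hk]
  · rw [integral_cos_int_mul_pi (n := k - 1) (by omega)]
    simp

/-- Solutions of -Δu = π²u in the strip {0 < y < 1}, vanishing on the line x = 0 and on the
horizontal boundary, with at most linear growth, are of the form A·x·sin(πy). -/
theorem stmt0 (u : ℝ → ℝ → ℝ) (C : ℝ) (hC : 0 < C)
    (hsmooth : ContDiffOn ℝ (⊤ : ℕ∞) (fun p : ℝ × ℝ => u p.1 p.2) {p : ℝ × ℝ | 0 < p.2 ∧ p.2 < 1})
    (hcont : ContinuousOn (fun p : ℝ × ℝ => u p.1 p.2) {p : ℝ × ℝ | 0 ≤ p.2 ∧ p.2 ≤ 1})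
    (hPDE : ∀ x y : ℝ, 0 < y → y < 1 →
      px (px u) x y + py (py u) x y = -(π ^ 2) * u x y)
    (h0 : ∀ y : ℝ, 0 ≤ y → y ≤ 1 → u 0 y = 0)
    (hb : ∀ x : ℝ, u x 0 = 0 ∧ u x 1 = 0)
    (hgrowth : ∀ x y : ℝ, 0 ≤ y → y ≤ 1 → |u x y| ≤ C * (1 + |x|)) :
    ∃ A : ℝ, ∀ x y : ℝ, 0 < y → y < 1 → u x y = A * x * Real.sin (π * y) := by
  set U : ℝ → ℝ → ℝ := fun x y => u x (max 0 (min y 1)) with hUdef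
  have hU : Continuous (Function.uncurry U) :=
    hcont.comp_continuous (f := fun p : ℝ × ℝ => (p.1, max 0 (min p.2 1))) (by fun_prop)
      fun p => ⟨le_max_left _ _, max_le zero_le_one (min_le_right _ _)⟩
  have hUu : ∀ x, ∀ y ∈ Icc (0 : ℝ) 1, U x y = u x y := by
    intro x y hy
    simp [hUdef, hy.1, hy.2]
  have hcoeff : ∀ k x, sineCoeff u 0 k x = ∫ s in (0 : ℝ)..1, U x s * sin (k * π * s) := by
    intro k x
    refine integral_congr fun s hs => ?_
    rw [uIcc_of_le zero_le_one] at hs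
    simp [hUu x s hs]
  have hcoeff_cont : ∀ k, Continuous (sineCoeff u 0 k) := by
    intro k
    rw [funext (hcoeff k)]
    exact continuous_parametric_intervalIntegral_of_continuous'
      (f := fun x s => U x s * sin (k * π * s)) (hU.mul (by fun_prop)) 0 1
  have hode := sineCoeff_eq_integral hsmooth hcont hPDE h0 hb hgrowth
  have hhigh : ∀ k : ℕ, k ≠ 1 → ∀ x, sineCoeff u 0 k x = 0 := by
    intro k hk x
    rcases Nat.eq_zero_or_pos k with rfl | hk0
    · simp [sineCoeff]
    · obtain ⟨c, hc⟩ := hode k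
      have hk2 : (2 : ℝ) ≤ k := by exact_mod_cast (by omega : 2 ≤ k)
      refine eq_zero_of_integral_equation (hcoeff_cont k) ?_ hc
        (fun x => abs_sineCoeff_le hgrowth le_rfl (by norm_num) k x) x
      nlinarith [pow_pos pi_pos 2, mul_pos (pow_pos pi_pos 2) (by nlinarith : 0 < (k : ℝ) ^ 2 - 1)]
  obtain ⟨c, hc⟩ := hode 1
  have hlow : ∀ x, sineCoeff u 0 1 x = x * c := fun x => by simpa using hc x
  refine ⟨2 * c, fun x y hy0 hy1 => ?_⟩
  have hUx : Continuous (U x) := hU.comp (by fun_prop : Continuous fun y : ℝ => (x, y))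
  have hzero := eq_zero_of_integral_mul_sin_eq_zero
    (f := fun s => U x s - 2 * c * x * sin (π * s)) (by fun_prop) (fun k => by
      simp_rw [sub_mul, mul_assoc (2 * c * x)]
      rw [integral_sub (Continuous.intervalIntegrable (by fun_prop) _ _)
        (Continuous.intervalIntegrable (by fun_prop) _ _), integral_const_mul, ← hcoeff,
        integral_sin_pi_mul_sin]
      split_ifs with hk
      · rw [hk, hlow]; ring
      · rw [hhigh k hk]; ring) hy0 hy1
  rw [hUu x y ⟨hy0.le, hy1.le⟩] at hzero
  linarith
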